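/- Let k ≥ 2, κ := 2^{k−1}, ε ∈ (0,1), let Q0 ≥ 2 be a real number, let q1 ∈ ℤ[i] \ {0} and r1, j ∈ ℤ[i]. Set S_k(q1,r1,j) := ∑_{q∈ℤ[i]} exp(−π N(q)/(κ Q0)) · e(Re(j r1 q^k / q1^k)). Then |S_k(q1,r1,j)|^κ ≤ C(k,ε) · Q0^{κ−k+ε} · ∑_{α=(α_1,…,α_{k−1})∈ℤ[i]^{k−1}, N(α_v)≤Q0^{1+ε} for all v} | ∑_{q∈ℤ[i]} exp(−(π/(κQ0)) · ∑_{u∈{0,1}^{k−1}} N(u·α + q)) · e(Re((j r1 / q1^k) · k!·α_1⋯α_{k−1}·(q + (α_1 + ⋯ + α_{k−1})/2))) |, where u·α := u_1α_1 + ⋯ + u_{k−1}α_{k−1} and C(k,ε) depends only on k and ε. -/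

import Mathlib

noncomputable section

/-- `e(t) = exp(2πit)`. -/
def e (t : ℝ) : ℂ := Complex.exp (2 * Real.pi * Complex.I * t)

/-- The norm of a Gaussian integer, as a real number. -/
def gN (z : GaussianInt) : ℝ := (z.re : ℝ) ^ 2 + (z.im : ℝ) ^ 2

/-- The smoothed `k`-th power Gauss-type sum
`S_k(q₁,r₁,j) = ∑_{q ∈ ℤ[i]} exp(-π N(q)/(κQ₀)) e(Re(j r₁ q^k/q₁^k))`, `κ = 2^{k-1}`. -/
def Sk (k : ℕ) (Q0 : ℝ) (q1 r1 j : GaussianInt) : ℂ :=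
  ∑' q : GaussianInt,
    ((Real.exp (-Real.pi * gN q / ((2 : ℝ) ^ (k - 1) * Q0)) : ℝ) : ℂ)
      * e (((j : ℂ) * (r1 : ℂ) * (q : ℂ) ^ k / (q1 : ℂ) ^ k).re)

/-!
Weyl differencing, carried out for a summable function `F` on an abelian group. Since
`|∑ F|² = ∑ h, ∑ x, F (x + h) conj (F x)`, Cauchy-Schwarz over the steps chosen so far replaces
`F` by its multiplicative difference at each stage, while the steps outside a finite set `A` cost
only the correlation mass `∑ h ∉ A, ∑ x, |F (x + h)| |F x|`. After `m` stages the `2 ^ m`-th power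
of `|∑ F|` is bounded by `|A| ^ (2 ^ m - m - 1)` times a sum over `m`-tuples of steps in `A`.

For a Gaussian of width `Q` times a phase `e (φ x)`, the steps of norm at least `Q ^ (1 + δ)` have
correlation mass `≪ exp (-c Q ^ δ)`, and there are `≪ Q ^ (1 + δ)` smaller ones. The iterated
difference is again a smoothed phase: its weight is the sum of the weights over the vertices of a
cube, and its phase is the iterated forward difference of `φ`. For `φ q = Re (ξ q ^ k)` and
`k - 1` steps, the latter is linear in `q` with leading coefficient `k! α₁ ⋯ αₖ₋₁`.
-/

open scoped ComplexConjugate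

lemma sum_piFinset_const_succ {ι M : Type*} [AddCommMonoid M] {m : ℕ} (A : Finset ι)
    (f : (Fin (m + 1) → ι) → M) :
    ∑ α ∈ Fintype.piFinset fun _ ↦ A, f α =
      ∑ γ ∈ Fintype.piFinset fun _ : Fin m ↦ A, ∑ h ∈ A, f (Fin.cons h γ) := by
  rw [Finset.sum_comm, ← Finset.sum_product']
  refine Finset.sum_equiv (Fin.consEquiv fun _ ↦ ι).symm (fun α ↦ ?_) fun α _ ↦ ?_
  · rw [Fin.mem_piFinset_iff_zero_tail, Finset.mem_product]
    rfl
  · exact congrArg f (Fin.cons_self_tail α).symm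

section Differencing

variable {G 𝕜 : Type*} [AddCommGroup G] [RCLike 𝕜]

/-- The multiplicative difference `x ↦ F (x + h) conj (F x)`, the analogue of `fwdDiff` which
produces the phase `φ (x + h) - φ x` from a phase `φ`. -/
def mulDiff (h : G) (F : G → 𝕜) (x : G) : 𝕜 := F (x + h) * conj (F x)

/-- The multiplicative differences of `F` iterated along the entries of `α`, the step `α 0` being
taken last. -/
def iterMulDiff (F : G → 𝕜) : {m : ℕ} → (Fin m → G) → G → 𝕜
  | 0, _ => F
  | _ + 1, α => mulDiff (α 0) (iterMulDiff F (Fin.tail α))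

/-- The part of `(∑ ‖F‖)² = ∑ h, ∑ x, ‖F (x + h)‖ ‖F x‖` coming from steps `h` outside `A`: the
error made when differencing is restricted to steps in `A`. -/
def offDiagonalMass (A : Finset G) (F : G → 𝕜) : ℝ :=
  ∑' h : {h // h ∉ A}, ∑' x, ‖F (x + h)‖ * ‖F x‖

/-- The change of variables `(h, x) ↦ (x + h, x)`. -/
@[simps]
def addShear (G : Type*) [AddCommGroup G] : G × G ≃ G × G where
  toFun p := (p.2 + p.1, p.2)
  invFun p := (p.1 - p.2, p.2)
  left_inv p := by simp
  right_inv p := by simp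

lemma summable_norm_add_mul {R : Type*} [NormedRing R] {f g : G → R}
    (hf : Summable fun x ↦ ‖f x‖) (hg : Summable fun x ↦ ‖g x‖) :
    Summable fun p : G × G ↦ ‖f (p.2 + p.1) * g p.2‖ := by
  simpa only [Function.comp_def, addShear_apply] using
    (hf.mul_norm hg).comp_injective (addShear G).injective

lemma tsum_tsum_add_mul {R : Type*} [NormedRing R] [CompleteSpace R] {f g : G → R}
    (hf : Summable fun x ↦ ‖f x‖) (hg : Summable fun x ↦ ‖g x‖) :
    ∑' h, ∑' x, f (x + h) * g x = (∑' x, f x) * ∑' x, g x := by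
  rw [tsum_mul_tsum_of_summable_norm hf hg, ← (addShear G).tsum_eq]
  exact (summable_norm_add_mul hf hg).of_norm.tsum_prod.symm

lemma norm_mulDiff (h : G) (F : G → 𝕜) (x : G) : ‖mulDiff h F x‖ = ‖F (x + h)‖ * ‖F x‖ := by
  rw [mulDiff, norm_mul, RCLike.norm_conj]

lemma summable_norm_mulDiff {F : G → 𝕜} (hF : Summable fun x ↦ ‖F x‖) :
    Summable fun p : G × G ↦ ‖mulDiff p.1 F p.2‖ := by
  simpa only [norm_mulDiff, norm_mul, norm_norm] using summable_norm_add_mul hF.norm hF.norm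

lemma norm_tsum_mulDiff_le {F : G → 𝕜} (hF : Summable fun x ↦ ‖F x‖) (h : G) :
    ‖∑' x, mulDiff h F x‖ ≤ ∑' x, ‖F (x + h)‖ * ‖F x‖ := by
  simpa only [norm_mulDiff] using
    norm_tsum_le_tsum_norm ((summable_norm_mulDiff hF).prod_factor h)

lemma summable_tsum_norm_add_mul {F : G → 𝕜} (hF : Summable fun x ↦ ‖F x‖) :
    Summable fun h ↦ ∑' x, ‖F (x + h)‖ * ‖F x‖ := by
  simpa only [norm_mulDiff] using (summable_norm_mulDiff hF).prod

lemma sq_norm_tsum_le_tsum_norm_tsum_mulDiff {F : G → 𝕜} (hF : Summable fun x ↦ ‖F x‖) :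
    ‖∑' x, F x‖ ^ 2 ≤ ∑' h, ‖∑' x, mulDiff h F x‖ := by
  have hconj : Summable fun x ↦ ‖conj (F x)‖ := by simpa only [RCLike.norm_conj] using hF
  have hsum : Summable fun h ↦ ‖∑' x, mulDiff h F x‖ :=
    (summable_tsum_norm_add_mul hF).of_nonneg_of_le (fun _ ↦ norm_nonneg _)
      (norm_tsum_mulDiff_le hF)
  calc ‖∑' x, F x‖ ^ 2 = ‖(∑' x, F x) * ∑' x, conj (F x)‖ := by
        rw [← RCLike.conj_tsum, norm_mul, RCLike.norm_conj, sq]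
    _ = ‖∑' h, ∑' x, mulDiff h F x‖ := by rw [← tsum_tsum_add_mul hF hconj]; rfl
    _ ≤ ∑' h, ‖∑' x, mulDiff h F x‖ := norm_tsum_le_tsum_norm hsum

lemma sq_norm_tsum_le {F : G → 𝕜} (hF : Summable fun x ↦ ‖F x‖) (A : Finset G) :
    ‖∑' x, F x‖ ^ 2 ≤ ∑ h ∈ A, ‖∑' x, mulDiff h F x‖ + offDiagonalMass A F := by
  have hmass := summable_tsum_norm_add_mul hF
  have hsum : Summable fun h ↦ ‖∑' x, mulDiff h F x‖ :=
    hmass.of_nonneg_of_le (fun _ ↦ norm_nonneg _) (norm_tsum_mulDiff_le hF)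
  calc ‖∑' x, F x‖ ^ 2 ≤ ∑' h, ‖∑' x, mulDiff h F x‖ :=
        sq_norm_tsum_le_tsum_norm_tsum_mulDiff hF
    _ = ∑ h ∈ A, ‖∑' x, mulDiff h F x‖ + ∑' h : {h // h ∉ A}, ‖∑' x, mulDiff h.1 F x‖ :=
        (hsum.sum_add_tsum_subtype_compl A).symm
    _ ≤ _ := by
        gcongr
        exact (hsum.subtype _).tsum_le_tsum (fun h ↦ norm_tsum_mulDiff_le hF h.1)
          (hmass.subtype _)

lemma offDiagonalMass_nonneg (A : Finset G) (F : G → 𝕜) : 0 ≤ offDiagonalMass A F :=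
  tsum_nonneg fun _ ↦ tsum_nonneg fun _ ↦ by positivity

lemma offDiagonalMass_le_tsum {F : G → 𝕜} {A : Finset G} {W : G × G → ℝ}
    (hF : Summable fun x ↦ ‖F x‖) (hW : Summable W)
    (hFW : ∀ h ∉ A, ∀ x, ‖F (x + h)‖ * ‖F x‖ ≤ W (h, x)) :
    offDiagonalMass A F ≤ ∑' h : {h // h ∉ A}, ∑' x, W (h.1, x) := by
  have hFF : Summable fun p : G × G ↦ ‖F (p.2 + p.1)‖ * ‖F p.2‖ := by
    simpa only [norm_mulDiff] using summable_norm_mulDiff hF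
  refine (hFF.prod.subtype _).tsum_le_tsum (fun h ↦ ?_) (hW.prod.subtype _)
  exact (hFF.prod_factor h.1).tsum_le_tsum (hFW h h.2) (hW.prod_factor h.1)

lemma offDiagonalMass_mono {F H : G → 𝕜} (hF : Summable fun x ↦ ‖F x‖)
    (hHF : ∀ x, ‖H x‖ ≤ ‖F x‖) (A : Finset G) : offDiagonalMass A H ≤ offDiagonalMass A F := by
  refine offDiagonalMass_le_tsum (W := fun p ↦ ‖F (p.2 + p.1)‖ * ‖F p.2‖)
    (hF.of_nonneg_of_le (fun _ ↦ norm_nonneg _) hHF) ?_ fun h _ x ↦ ?_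
  · simpa only [norm_mulDiff] using summable_norm_mulDiff hF
  · exact mul_le_mul (hHF _) (hHF _) (norm_nonneg _) (norm_nonneg _)

lemma offDiagonalMass_le_mul_sq_tsum {F : G → 𝕜} {V : G → ℝ} {A : Finset G} {η : ℝ}
    (hF : Summable fun x ↦ ‖F x‖) (hV : Summable V) (hV0 : ∀ x, 0 ≤ V x) (hη : 0 ≤ η)
    (hFV : ∀ h ∉ A, ∀ x, ‖F (x + h)‖ * ‖F x‖ ≤ η * (V (x + h) * V x)) :
    offDiagonalMass A F ≤ η * (∑' x, V x) ^ 2 := by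
  have hVV : Summable fun p : G × G ↦ η * (V (p.2 + p.1) * V p.2) :=
    (summable_norm_add_mul hV.norm hV.norm).of_norm.mul_left η
  calc offDiagonalMass A F ≤ ∑' h : {h // h ∉ A}, ∑' x, η * (V (x + h) * V x) :=
        offDiagonalMass_le_tsum hF hVV hFV
    _ ≤ ∑' h, ∑' x, η * (V (x + h) * V x) :=
        hVV.prod.tsum_subtype_le _ {h | h ∉ A}
          fun h ↦ tsum_nonneg fun x ↦ mul_nonneg hη (mul_nonneg (hV0 _) (hV0 _))
    _ = η * (∑' x, V x) ^ 2 := by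
        simp only [tsum_mul_left]
        rw [tsum_tsum_add_mul hV.norm hV.norm, sq]

lemma norm_iterMulDiff_le {F : G → 𝕜} (hF : ∀ x, ‖F x‖ ≤ 1) {m : ℕ} (α : Fin m → G) (x : G) :
    ‖iterMulDiff F α x‖ ≤ ‖F x‖ := by
  induction m generalizing x with
  | zero => exact le_rfl
  | succ m ih =>
    rw [iterMulDiff, norm_mulDiff]
    exact (mul_le_of_le_one_left (norm_nonneg _) ((ih _ _).trans (hF _))).trans (ih _ _)

lemma summable_norm_iterMulDiff {F : G → 𝕜} (hF : Summable fun x ↦ ‖F x‖)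
    (hF1 : ∀ x, ‖F x‖ ≤ 1) {m : ℕ} (α : Fin m → G) :
    Summable fun x ↦ ‖iterMulDiff F α x‖ :=
  hF.of_nonneg_of_le (fun _ ↦ norm_nonneg _) (norm_iterMulDiff_le hF1 α)

lemma norm_iterMulDiff_zero (F : G → 𝕜) (m : ℕ) (x : G) :
    ‖iterMulDiff F (0 : Fin m → G) x‖ = ‖F x‖ ^ 2 ^ m := by
  induction m with
  | zero => rw [pow_zero, pow_one, iterMulDiff]
  | succ m ih =>
    have htail : Fin.tail (0 : Fin (m + 1) → G) = 0 := rfl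
    rw [iterMulDiff, htail, norm_mulDiff, Pi.zero_apply, add_zero, ih, ← sq, ← pow_mul, ← pow_succ]

lemma one_le_norm_tsum_iterMulDiff_zero {F : G → 𝕜} (hF : Summable fun x ↦ ‖F x‖)
    (hF1 : ∀ x, ‖F x‖ ≤ 1) {x₀ : G} (hx₀ : ‖F x₀‖ = 1) {m : ℕ} (hm : m ≠ 0) :
    1 ≤ ‖∑' x, iterMulDiff F (0 : Fin m → G) x‖ := by
  obtain ⟨m, rfl⟩ := Nat.exists_eq_succ_of_ne_zero hm
  set H : G → 𝕜 := iterMulDiff F (0 : Fin m → G) with hH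
  have hsq (x : G) : iterMulDiff F (0 : Fin (m + 1) → G) x = ((‖H x‖ ^ 2 : ℝ) : 𝕜) := by
    rw [iterMulDiff, mulDiff, Pi.zero_apply, add_zero]
    push_cast
    exact RCLike.mul_conj _
  have hsum : Summable fun x ↦ ‖H x‖ ^ 2 := by
    have := summable_norm_iterMulDiff hF hF1 (0 : Fin (m + 1) → G)
    simpa only [hsq, RCLike.norm_ofReal, abs_pow, sq_abs] using this
  calc (1 : ℝ) = ‖H x₀‖ ^ 2 := by rw [hH, norm_iterMulDiff_zero, hx₀, one_pow, one_pow]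
    _ ≤ ∑' x, ‖H x‖ ^ 2 := hsum.le_tsum x₀ fun _ _ ↦ by positivity
    _ ≤ |∑' x, ‖H x‖ ^ 2| := le_abs_self _
    _ = ‖∑' x, iterMulDiff F (0 : Fin (m + 1) → G) x‖ := by
        simp only [hsq]
        rw [← RCLike.ofReal_tsum, RCLike.norm_ofReal]

lemma one_le_sum_norm_tsum_iterMulDiff {F : G → 𝕜} (hF : Summable fun x ↦ ‖F x‖)
    (hF1 : ∀ x, ‖F x‖ ≤ 1) {x₀ : G} (hx₀ : ‖F x₀‖ = 1) {m : ℕ} (hm : m ≠ 0) {A : Finset G}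
    (hA : 0 ∈ A) : 1 ≤ ∑ α ∈ Fintype.piFinset fun _ : Fin m ↦ A, ‖∑' x, iterMulDiff F α x‖ :=
  (one_le_norm_tsum_iterMulDiff_zero hF hF1 hx₀ hm).trans
    (Finset.single_le_sum (f := fun α : Fin m → G ↦ ‖∑' x, iterMulDiff F α x‖)
      (fun _ _ ↦ norm_nonneg _) (Fintype.mem_piFinset.mpr fun _ ↦ hA))

lemma sq_sum_norm_tsum_iterMulDiff_le {F : G → 𝕜} (hF : Summable fun x ↦ ‖F x‖)
    (hF1 : ∀ x, ‖F x‖ ≤ 1) (A : Finset G) (m : ℕ) :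
    (∑ α ∈ Fintype.piFinset fun _ : Fin m ↦ A, ‖∑' x, iterMulDiff F α x‖) ^ 2 ≤
      (A.card : ℝ) ^ m *
        (∑ α ∈ Fintype.piFinset fun _ : Fin (m + 1) ↦ A, ‖∑' x, iterMulDiff F α x‖ +
          (A.card : ℝ) ^ m * offDiagonalMass A F) := by
  have hcard : ((Fintype.piFinset fun _ : Fin m ↦ A).card : ℝ) = (A.card : ℝ) ^ m := by
    rw [Fintype.card_piFinset_const, Nat.cast_pow]
  refine sq_sum_le_card_mul_sum_sq.trans ?_
  rw [hcard]
  gcongr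
  rw [← hcard, ← nsmul_eq_mul, ← Finset.sum_const, sum_piFinset_const_succ,
    ← Finset.sum_add_distrib]
  gcongr with α
  simp only [iterMulDiff, Fin.cons_zero, Fin.tail_cons]
  exact (sq_norm_tsum_le (summable_norm_iterMulDiff hF hF1 α) A).trans
    (by gcongr; exact offDiagonalMass_mono hF (norm_iterMulDiff_le hF1 α) A)

lemma sq_sum_norm_tsum_iterMulDiff_add_one_le {F : G → 𝕜} (hF : Summable fun x ↦ ‖F x‖)
    (hF1 : ∀ x, ‖F x‖ ≤ 1) {A : Finset G} (hA : A.Nonempty) {D : ℝ} (m : ℕ)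
    (hD : (A.card : ℝ) ^ (2 * m) * offDiagonalMass A F ≤ D) :
    (∑ α ∈ Fintype.piFinset fun _ : Fin m ↦ A, ‖∑' x, iterMulDiff F α x‖ + 1) ^ 2 ≤
      2 * (D + 1) * ((A.card : ℝ) ^ m *
        (∑ α ∈ Fintype.piFinset fun _ : Fin (m + 1) ↦ A, ‖∑' x, iterMulDiff F α x‖ + 1)) := by
  set n : ℝ := (A.card : ℝ)
  set X := ∑ α ∈ Fintype.piFinset fun _ : Fin m ↦ A, ‖∑' x, iterMulDiff F α x‖
  set Y := ∑ α ∈ Fintype.piFinset fun _ : Fin (m + 1) ↦ A, ‖∑' x, iterMulDiff F α x‖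
  have hD0 : 0 ≤ D := (mul_nonneg (by positivity) (offDiagonalMass_nonneg A F)).trans hD
  have hn : 1 ≤ n ^ m := one_le_pow₀ (Nat.one_le_cast.mpr hA.card_pos)
  have hX : X ^ 2 ≤ n ^ m * Y + D :=
    calc X ^ 2 ≤ n ^ m * (Y + n ^ m * offDiagonalMass A F) :=
          sq_sum_norm_tsum_iterMulDiff_le hF hF1 A m
      _ = n ^ m * Y + n ^ (2 * m) * offDiagonalMass A F := by ring
      _ ≤ n ^ m * Y + D := by gcongr
  have hY : n ^ m * Y ≤ (D + 1) * (n ^ m * Y) :=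
    le_mul_of_one_le_left (by positivity) (by linarith)
  have hDn : D + 1 ≤ (D + 1) * n ^ m := le_mul_of_one_le_right (by positivity) hn
  calc (X + 1) ^ 2 ≤ 2 * (X ^ 2 + 1 ^ 2) := add_sq_le
    _ ≤ 2 * ((D + 1) * (n ^ m * Y) + (D + 1) * n ^ m) := by linarith
    _ = 2 * (D + 1) * (n ^ m * (Y + 1)) := by ring

/-- The summand `1` absorbs the contribution of the steps outside `A`. -/
lemma norm_tsum_pow_two_pow_le {F : G → 𝕜} (hF : Summable fun x ↦ ‖F x‖)
    (hF1 : ∀ x, ‖F x‖ ≤ 1) {A : Finset G} (hA : A.Nonempty) {D : ℝ} (m : ℕ)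
    (hD : (A.card : ℝ) ^ (2 * m) * offDiagonalMass A F ≤ D) :
    ‖∑' x, F x‖ ^ 2 ^ m ≤ (2 * (D + 1)) ^ (2 ^ m - 1) * (A.card : ℝ) ^ (2 ^ m - (m + 1)) *
      (∑ α ∈ Fintype.piFinset fun _ : Fin m ↦ A, ‖∑' x, iterMulDiff F α x‖ + 1) := by
  have hn : (1 : ℝ) ≤ A.card := Nat.one_le_cast.mpr hA.card_pos
  have hmass := offDiagonalMass_nonneg A F
  have hD0 : 0 ≤ D := le_trans (by positivity) hD
  induction m with
  | zero => simp [iterMulDiff]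
  | succ m ih =>
    have hDm : (A.card : ℝ) ^ (2 * m) * offDiagonalMass A F ≤ D :=
      le_trans (by gcongr; omega) hD
    have hstep := sq_sum_norm_tsum_iterMulDiff_add_one_le hF hF1 hA m hDm
    specialize ih hDm
    set n : ℝ := (A.card : ℝ)
    set X := ∑ α ∈ Fintype.piFinset fun _ : Fin m ↦ A, ‖∑' x, iterMulDiff F α x‖
    set Y := ∑ α ∈ Fintype.piFinset fun _ : Fin (m + 1) ↦ A, ‖∑' x, iterMulDiff F α x‖
    have hlt : m + 1 ≤ 2 ^ m := Nat.lt_two_pow_self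
    have hexpD : (2 ^ m - 1) * 2 + 1 = 2 ^ (m + 1) - 1 := by omega
    have hexpn : (2 ^ m - (m + 1)) * 2 + m = 2 ^ (m + 1) - (m + 1 + 1) := by omega
    calc ‖∑' x, F x‖ ^ 2 ^ (m + 1) = (‖∑' x, F x‖ ^ 2 ^ m) ^ 2 := by rw [pow_succ, pow_mul]
      _ ≤ ((2 * (D + 1)) ^ (2 ^ m - 1) * n ^ (2 ^ m - (m + 1)) * (X + 1)) ^ 2 := by gcongr
      _ = (2 * (D + 1)) ^ ((2 ^ m - 1) * 2) * n ^ ((2 ^ m - (m + 1)) * 2) * (X + 1) ^ 2 := by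
        rw [mul_pow, mul_pow, pow_mul, pow_mul n]
      _ ≤ (2 * (D + 1)) ^ ((2 ^ m - 1) * 2) * n ^ ((2 ^ m - (m + 1)) * 2) *
          (2 * (D + 1) * (n ^ m * (Y + 1))) := by gcongr
      _ = (2 * (D + 1)) ^ ((2 ^ m - 1) * 2 + 1) * n ^ ((2 ^ m - (m + 1)) * 2 + m) * (Y + 1) := by
        ring
      _ = _ := by rw [hexpD, hexpn]

end Differencing

section ForwardDifferences

variable {M N : Type*} [AddCommMonoid M] [AddCommGroup N]

/-- The forward differences of `f` iterated along the entries of `α`. -/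
def iterFwdDiff (f : M → N) : {m : ℕ} → (Fin m → M) → M → N
  | 0, _ => f
  | _ + 1, α => fwdDiff (α 0) (iterFwdDiff f (Fin.tail α))

lemma iterFwdDiff_fwdDiff (h : M) (f : M → N) {m : ℕ} (α : Fin m → M) :
    iterFwdDiff (fwdDiff h f) α = fwdDiff h (iterFwdDiff f α) := by
  induction m with
  | zero => rfl
  | succ m ih =>
    funext x
    simp only [iterFwdDiff, ih, fwdDiff, add_right_comm x h]
    abel

lemma iterFwdDiff_comp_addMonoidHom {M' N' : Type*} [AddCommMonoid M'] [AddCommGroup N']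
    (L : N →+ N') (ι : M' →+ M) (f : M → N) {m : ℕ} (α : Fin m → M') (x : M') :
    iterFwdDiff (fun y ↦ L (f (ι y))) α x = L (iterFwdDiff f (fun v ↦ ι (α v)) (ι x)) := by
  induction m generalizing x with
  | zero => rfl
  | succ m ih => simp only [iterFwdDiff, fwdDiff, ih, map_add, map_sub]; rfl

lemma iterFwdDiff_sum_smul {R κ : Type*} [Monoid R] [DistribMulAction R N] (s : Finset κ)
    (c : κ → R) (f : κ → M → N) {m : ℕ} (α : Fin m → M) :
    iterFwdDiff (∑ i ∈ s, c i • f i) α = ∑ i ∈ s, c i • iterFwdDiff (f i) α := by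
  induction m with
  | zero => rfl
  | succ m ih => simp only [iterFwdDiff, ih, fwdDiff_finsetSum, fwdDiff_const_smul]

end ForwardDifferences

section Powers

variable {R : Type*} [CommRing R]

lemma fwdDiff_pow (h : R) (n : ℕ) :
    fwdDiff h (fun z : R ↦ z ^ n) =
      ∑ i ∈ Finset.range n, (h ^ (n - i) * (n.choose i : R)) • fun z : R ↦ z ^ i := by
  funext z
  rw [fwdDiff, add_pow, Finset.sum_range_succ, Finset.sum_apply]
  simp only [Nat.sub_self, pow_zero, Nat.choose_self, Nat.cast_one, mul_one, add_sub_cancel_right,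
    Pi.smul_apply, smul_eq_mul]
  exact Finset.sum_congr rfl fun i _ ↦ by ring

lemma iterFwdDiff_pow_succ {m : ℕ} (n : ℕ) (α : Fin (m + 1) → R) (z : R) :
    iterFwdDiff (fun z ↦ z ^ n) α z = ∑ i ∈ Finset.range n,
      α 0 ^ (n - i) * (n.choose i : R) * iterFwdDiff (fun z ↦ z ^ i) (Fin.tail α) z := by
  rw [iterFwdDiff, ← iterFwdDiff_fwdDiff, fwdDiff_pow, iterFwdDiff_sum_smul, Finset.sum_apply]
  rfl

lemma iterFwdDiff_pow_of_lt {m n : ℕ} (hnm : n < m) (α : Fin m → R) (z : R) :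
    iterFwdDiff (fun z ↦ z ^ n) α z = 0 := by
  induction m generalizing n with
  | zero => exact absurd hnm n.not_lt_zero
  | succ m ih =>
    rw [iterFwdDiff_pow_succ]
    refine Finset.sum_eq_zero fun i hi ↦ ?_
    rw [ih (by have := Finset.mem_range.mp hi; omega), mul_zero]

lemma iterFwdDiff_pow_self {m : ℕ} (α : Fin m → R) (z : R) :
    iterFwdDiff (fun z ↦ z ^ m) α z = (m.factorial : R) * ∏ v, α v := by
  induction m with
  | zero => simp [iterFwdDiff]
  | succ m ih =>
    rw [iterFwdDiff_pow_succ, Finset.sum_range_succ, ih, Finset.sum_eq_zero, Fin.prod_univ_succ]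
    · simp only [Fin.tail, Nat.choose_succ_self_right, Nat.factorial_succ, Nat.add_sub_cancel_left]
      push_cast
      ring
    · intro i hi
      rw [iterFwdDiff_pow_of_lt (Finset.mem_range.mp hi), mul_zero]

lemma two_mul_iterFwdDiff_pow_add_one {m : ℕ} (α : Fin m → R) (z : R) :
    2 * iterFwdDiff (fun z ↦ z ^ (m + 1)) α z =
      ((m + 1).factorial : R) * (∏ v, α v) * (2 * z + ∑ v, α v) := by
  induction m with
  | zero => simp [iterFwdDiff]
  | succ m ih =>
    have hchoose : 2 * ((m + 1 + 1).choose m : R) = (m + 2) * (m + 1) := by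
      have hnat := Nat.add_one_mul_choose_eq (m + 1) 1
      rw [Nat.choose_one_right, ← Nat.choose_symm_of_eq_add (n := m + 1 + 1) (a := m) rfl] at hnat
      have hcast := congrArg (Nat.cast : ℕ → R) hnat
      push_cast at hcast
      linear_combination -hcast
    have hlow : ∑ i ∈ Finset.range m, α 0 ^ (m + 1 + 1 - i) * ((m + 1 + 1).choose i : R) *
        iterFwdDiff (fun z ↦ z ^ i) (Fin.tail α) z = 0 :=
      Finset.sum_eq_zero fun i hi ↦ by
        rw [iterFwdDiff_pow_of_lt (Finset.mem_range.mp hi), mul_zero]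
    rw [iterFwdDiff_pow_succ, Finset.sum_range_succ, Finset.sum_range_succ, hlow,
      iterFwdDiff_pow_self, Fin.prod_univ_succ, Fin.sum_univ_succ, zero_add,
      show m + 1 + 1 - m = 2 by omega, Nat.add_sub_cancel_left, Nat.choose_succ_self_right]
    have hih := ih (Fin.tail α)
    simp only [Fin.tail, Nat.factorial_succ, Nat.cast_mul, Nat.cast_succ] at hih ⊢
    linear_combination α 0 ^ 2 * (m.factorial : R) * (∏ v : Fin m, α v.succ) * hchoose +
      α 0 * (m + 2) * hih

end Powers

section SmoothedPhases

lemma sum_cube_succ {G M : Type*} [AddCommMonoid G] [AddCommMonoid M] {m : ℕ} (f : G → M)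
    (α : Fin (m + 1) → G) (x : G) :
    ∑ u : Fin (m + 1) → Bool, f ((∑ v, if u v then α v else 0) + x) =
      ∑ u : Fin m → Bool, f ((∑ v, if u v then Fin.tail α v else 0) + (x + α 0)) +
        ∑ u : Fin m → Bool, f ((∑ v, if u v then Fin.tail α v else 0) + x) := by
  rw [← (Fin.consEquiv fun _ ↦ Bool).sum_comp, Fintype.sum_prod_type, Fintype.sum_bool]
  simp only [Fin.consEquiv, Equiv.coe_fn_mk, Fin.sum_univ_succ, Fin.cons_zero, Fin.cons_succ,
    if_true, Bool.false_eq_true, if_false, zero_add, Fin.tail, add_comm x, add_assoc,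
    add_left_comm (α 0)]

lemma norm_e (t : ℝ) : ‖e t‖ = 1 := by
  have harg : (2 * Real.pi * Complex.I * t : ℂ) = ((2 * Real.pi * t : ℝ) : ℂ) * Complex.I := by
    push_cast
    ring
  rw [e, harg, Complex.norm_exp_ofReal_mul_I]

lemma e_mul_conj_e (s t : ℝ) : e s * conj (e t) = e (s - t) := by
  rw [e, e, e, ← Complex.exp_conj, ← Complex.exp_add]
  simp only [map_mul, Complex.conj_ofReal, Complex.conj_I, map_ofNat, Complex.ofReal_sub]
  ring_nf

variable {G : Type*}

/-- The exponential `e (φ x)` damped by the weight `exp (-w x)`. -/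
def smoothedPhase (w φ : G → ℝ) (x : G) : ℂ := (Real.exp (-w x) : ℂ) * e (φ x)

lemma norm_smoothedPhase (w φ : G → ℝ) (x : G) : ‖smoothedPhase w φ x‖ = Real.exp (-w x) := by
  rw [smoothedPhase, norm_mul, norm_e, mul_one, Complex.norm_real, Real.norm_eq_abs, Real.abs_exp]

variable [AddCommGroup G]

lemma mulDiff_smoothedPhase (h : G) (w φ : G → ℝ) :
    mulDiff h (smoothedPhase w φ) =
      smoothedPhase (fun x ↦ w (x + h) + w x) (fwdDiff h φ) := by
  funext x
  rw [mulDiff, smoothedPhase, smoothedPhase, smoothedPhase, map_mul, Complex.conj_ofReal,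
    mul_mul_mul_comm, e_mul_conj_e, ← Complex.ofReal_mul, ← Real.exp_add, neg_add, fwdDiff]

lemma iterMulDiff_smoothedPhase (w φ : G → ℝ) {m : ℕ} (α : Fin m → G) :
    iterMulDiff (smoothedPhase w φ) α =
      smoothedPhase (fun x ↦ ∑ u : Fin m → Bool, w ((∑ v, if u v then α v else 0) + x))
        (iterFwdDiff φ α) := by
  induction m with
  | zero => simp [iterMulDiff, iterFwdDiff]
  | succ m ih =>
    rw [iterMulDiff, ih, mulDiff_smoothedPhase, iterFwdDiff]
    simp only [sum_cube_succ w α]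

end SmoothedPhases

section GaussianSums

lemma gN_nonneg (q : GaussianInt) : 0 ≤ gN q := by
  unfold gN
  positivity

lemma gN_zero : gN 0 = 0 := by simp [gN]

lemma gN_le_two_mul_add (p q : GaussianInt) : gN p ≤ 2 * gN (q + p) + 2 * gN q := by
  simp only [gN, Zsqrtd.re_add, Zsqrtd.im_add, Int.cast_add]
  nlinarith [sq_nonneg ((p.re : ℝ) + 2 * q.re), sq_nonneg ((p.im : ℝ) + 2 * q.im)]

/-- The coordinates of a Gaussian integer with respect to the basis `1, i`. -/
@[simps]
def gaussianIntEquivProd : GaussianInt ≃ ℤ × ℤ where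
  toFun q := (q.re, q.im)
  invFun p := ⟨p.1, p.2⟩

/-- The Gaussian weight `π a N(q)`, normalised so that `∑ exp (-π a N(q))` is the square of a
theta series. -/
def gaussianWeight (a : ℝ) (q : GaussianInt) : ℝ := Real.pi * a * gN q

lemma gaussianWeight_nonneg {a : ℝ} (ha : 0 ≤ a) (q : GaussianInt) : 0 ≤ gaussianWeight a q :=
  mul_nonneg (by positivity) (gN_nonneg q)

lemma exp_neg_gaussianWeight (a : ℝ) (q : GaussianInt) :
    Real.exp (-gaussianWeight a q) =
      Real.exp (-Real.pi * a * (q.re : ℝ) ^ 2) * Real.exp (-Real.pi * a * (q.im : ℝ) ^ 2) := by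
  rw [← Real.exp_add, gaussianWeight, gN]
  ring_nf

lemma summable_exp_neg_mul_int_sq {a : ℝ} (ha : 0 < a) :
    Summable fun n : ℤ ↦ Real.exp (-Real.pi * a * (n : ℝ) ^ 2) := by
  refine (summable_pow_mul_jacobiTheta₂_term_bound 0 ha 0).congr fun n ↦ ?_
  rw [pow_zero, one_mul]
  ring_nf

lemma tsum_exp_neg_mul_int_sq_le {a : ℝ} (ha : 0 < a) (ha1 : a ≤ 1) :
    ∑' n : ℤ, Real.exp (-Real.pi * a * (n : ℝ) ^ 2) ≤
      1 / a ^ (1 / 2 : ℝ) * ∑' n : ℤ, Real.exp (-Real.pi * 1 * (n : ℝ) ^ 2) := by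
  rw [Real.tsum_exp_neg_mul_int_sq ha]
  gcongr with n
  · simpa only [mul_one_div] using summable_exp_neg_mul_int_sq (one_div_pos.mpr ha)
  · exact summable_exp_neg_mul_int_sq one_pos
  · rw [mul_one, neg_div]
    exact neg_le_neg (le_div_self Real.pi_pos.le ha ha1)

lemma summable_exp_neg_gaussianWeight {a : ℝ} (ha : 0 < a) :
    Summable fun q ↦ Real.exp (-gaussianWeight a q) := by
  have hint := summable_exp_neg_mul_int_sq ha
  have hprod := hint.mul_of_nonneg hint (fun _ ↦ (Real.exp_pos _).le) fun _ ↦ (Real.exp_pos _).le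
  simpa only [exp_neg_gaussianWeight, Function.comp_def, gaussianIntEquivProd_apply] using
    gaussianIntEquivProd.summable_iff.mpr hprod

lemma tsum_exp_neg_gaussianWeight {a : ℝ} (ha : 0 < a) :
    ∑' q, Real.exp (-gaussianWeight a q) =
      (∑' n : ℤ, Real.exp (-Real.pi * a * (n : ℝ) ^ 2)) ^ 2 := by
  have hint := (summable_exp_neg_mul_int_sq ha).norm
  rw [sq, tsum_mul_tsum_of_summable_norm hint hint, ← gaussianIntEquivProd.tsum_eq]
  exact tsum_congr (exp_neg_gaussianWeight a)

lemma exists_tsum_exp_neg_gaussianWeight_le :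
    ∃ K : ℝ, 0 < K ∧ ∀ a, 0 < a → a ≤ 1 → ∑' q, Real.exp (-gaussianWeight a q) ≤ K / a := by
  have hint := summable_exp_neg_mul_int_sq one_pos
  have hpos : 0 < ∑' n : ℤ, Real.exp (-Real.pi * 1 * (n : ℝ) ^ 2) :=
    hint.tsum_pos (fun _ ↦ (Real.exp_pos _).le) 0 (Real.exp_pos _)
  refine ⟨_, pow_pos hpos 2, fun a ha ha1 ↦ ?_⟩
  calc ∑' q, Real.exp (-gaussianWeight a q)
      ≤ (1 / a ^ (1 / 2 : ℝ) * ∑' n : ℤ, Real.exp (-Real.pi * 1 * (n : ℝ) ^ 2)) ^ 2 := by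
        rw [tsum_exp_neg_gaussianWeight ha]
        gcongr
        exact tsum_exp_neg_mul_int_sq_le ha ha1
    _ = _ := by
        rw [mul_pow, ← Real.sqrt_eq_rpow, div_pow, Real.sq_sqrt ha.le, one_pow,
          one_div_mul_eq_div]

end GaussianSums

section NormBall

lemma finite_gN_le (R : ℝ) : {q : GaussianInt | gN q ≤ R}.Finite := by
  have hsmall := (summable_exp_neg_gaussianWeight one_pos).tendsto_cofinite_zero.eventually
    (gt_mem_nhds (Real.exp_pos (-(Real.pi * 1 * R))))
  refine (Filter.eventually_cofinite.mp hsmall).subset fun q (hq : gN q ≤ R) ↦ not_lt.mpr ?_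
  rw [gaussianWeight]
  gcongr

/-- The Gaussian integers of norm at most `R`. -/
def normBall (R : ℝ) : Finset GaussianInt := (finite_gN_le R).toFinset

lemma mem_normBall {R : ℝ} {q : GaussianInt} : q ∈ normBall R ↔ gN q ≤ R := by
  simp [normBall]

lemma normBall_subset {R S : ℝ} (hRS : R ≤ S) : normBall R ⊆ normBall S :=
  fun _ hq ↦ mem_normBall.mpr ((mem_normBall.mp hq).trans hRS)

lemma zero_mem_normBall {R : ℝ} (hR : 0 ≤ R) : 0 ∈ normBall R :=
  mem_normBall.mpr (gN_zero.trans_le hR)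

lemma tsum_forall_gN_le {ι M : Type*} [Fintype ι] [DecidableEq ι] [AddCommMonoid M]
    [TopologicalSpace M] (R : ℝ) (f : (ι → GaussianInt) → M) :
    ∑' α : {α : ι → GaussianInt // ∀ v, gN (α v) ≤ R}, f α =
      ∑ α ∈ Fintype.piFinset fun _ ↦ normBall R, f α := by
  have hmem (α : ι → GaussianInt) :
      (∀ v, gN (α v) ≤ R) ↔ α ∈ Fintype.piFinset fun _ ↦ normBall R := by
    simp only [Fintype.mem_piFinset, mem_normBall]
  rw [← (Equiv.subtypeEquivRight hmem).symm.tsum_eq]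
  exact Finset.tsum_subtype _ f

/-- Rankin's trick: each point of the ball contributes at least `exp (-π)` to the Gaussian sum
with parameter `1 / R`. -/
lemma exists_card_normBall_le :
    ∃ K : ℝ, 0 < K ∧ ∀ R, 1 ≤ R → ((normBall R).card : ℝ) ≤ K * R := by
  obtain ⟨K, hK, htsum⟩ := exists_tsum_exp_neg_gaussianWeight_le
  refine ⟨Real.exp Real.pi * K, by positivity, fun R hR ↦ ?_⟩
  have hR0 : 0 < R := one_pos.trans_le hR
  have hlow (q) (hq : q ∈ normBall R) :
      Real.exp (-Real.pi) ≤ Real.exp (-gaussianWeight (1 / R) q) := by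
    rw [gaussianWeight, mul_assoc, one_div_mul_eq_div]
    gcongr
    exact mul_le_of_le_one_right Real.pi_pos.le ((div_le_one hR0).mpr (mem_normBall.mp hq))
  have hcard : ((normBall R).card : ℝ) * Real.exp (-Real.pi) ≤ K * R :=
    calc ((normBall R).card : ℝ) * Real.exp (-Real.pi)
        ≤ ∑ q ∈ normBall R, Real.exp (-gaussianWeight (1 / R) q) := by
          rw [← nsmul_eq_mul]
          exact Finset.card_nsmul_le_sum _ _ _ hlow
      _ ≤ ∑' q, Real.exp (-gaussianWeight (1 / R) q) :=
          (summable_exp_neg_gaussianWeight (one_div_pos.mpr hR0)).sum_le_tsum _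
            fun _ _ ↦ (Real.exp_pos _).le
      _ ≤ K / (1 / R) := htsum _ (one_div_pos.mpr hR0) ((div_le_one hR0).mpr hR)
      _ = K * R := by rw [div_div_eq_mul_div, div_one]
  rw [Real.exp_neg, ← div_eq_mul_inv, div_le_iff₀ (Real.exp_pos _)] at hcard
  linarith

end NormBall

section GaussianSmoothing

lemma rpow_mul_exp_neg_le {s b x : ℝ} (hs : 0 < s) (hb : 0 < b) (hx : 0 ≤ x) :
    x ^ s * Real.exp (-(b * x)) ≤ (s / b) ^ s := by
  have hlin : b * x / s ≤ Real.exp (b * x / s) :=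
    (le_add_of_nonneg_right zero_le_one).trans (Real.add_one_le_exp _)
  have hx' : x ≤ s / b * Real.exp (b * x / s) :=
    calc x = s / b * (b * x / s) := by field_simp
      _ ≤ s / b * Real.exp (b * x / s) := by gcongr
  rw [Real.exp_neg, ← div_eq_mul_inv, div_le_iff₀ (Real.exp_pos _)]
  calc x ^ s ≤ (s / b * Real.exp (b * x / s)) ^ s := by gcongr
    _ = (s / b) ^ s * Real.exp (b * x) := by
        rw [Real.mul_rpow (by positivity) (Real.exp_pos _).le, ← Real.exp_mul,
          div_mul_cancel₀ _ hs.ne']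

lemma norm_smoothedPhase_gaussianWeight_zero (a : ℝ) (φ : GaussianInt → ℝ) :
    ‖smoothedPhase (gaussianWeight a) φ 0‖ = 1 := by
  rw [norm_smoothedPhase, gaussianWeight, gN_zero, mul_zero, neg_zero, Real.exp_zero]

lemma norm_smoothedPhase_gaussianWeight_le_one {a : ℝ} (ha : 0 ≤ a) (φ : GaussianInt → ℝ)
    (q : GaussianInt) : ‖smoothedPhase (gaussianWeight a) φ q‖ ≤ 1 := by
  rw [norm_smoothedPhase, Real.exp_le_one_iff, neg_nonpos]
  exact gaussianWeight_nonneg ha q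

lemma summable_norm_smoothedPhase_gaussianWeight {a : ℝ} (ha : 0 < a) (φ : GaussianInt → ℝ) :
    Summable fun q ↦ ‖smoothedPhase (gaussianWeight a) φ q‖ := by
  simpa only [norm_smoothedPhase] using summable_exp_neg_gaussianWeight ha

/-- Half of each Gaussian weight is spent on the parallelogram inequality, the other half keeps the
sum over `q` convergent. -/
lemma exp_neg_gaussianWeight_add_mul_le {a R : ℝ} (ha : 0 ≤ a) {h : GaussianInt} (hR : R ≤ gN h)
    (q : GaussianInt) :
    Real.exp (-gaussianWeight a (q + h)) * Real.exp (-gaussianWeight a q) ≤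
      Real.exp (-(Real.pi * a / 4 * R)) *
        (Real.exp (-gaussianWeight (a / 2) (q + h)) * Real.exp (-gaussianWeight (a / 2) q)) := by
  have hpar : Real.pi * a / 4 * R ≤ Real.pi * a / 4 * (2 * gN (q + h) + 2 * gN q) := by
    gcongr
    exact hR.trans (gN_le_two_mul_add h q)
  simp only [← Real.exp_add, gaussianWeight, Real.exp_le_exp]
  linarith

lemma exists_offDiagonalMass_normBall_le :
    ∃ K : ℝ, 0 < K ∧ ∀ a, 0 < a → a ≤ 1 → ∀ (R : ℝ) (φ : GaussianInt → ℝ),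
      offDiagonalMass (normBall R) (smoothedPhase (gaussianWeight a) φ) ≤
        Real.exp (-(Real.pi * a / 4 * R)) * (K / a) ^ 2 := by
  obtain ⟨K, hK, htsum⟩ := exists_tsum_exp_neg_gaussianWeight_le
  refine ⟨K * 2, by positivity, fun a ha ha1 R φ ↦ ?_⟩
  have hsum := htsum (a / 2) (by positivity) (by linarith)
  rw [div_div_eq_mul_div] at hsum
  calc offDiagonalMass (normBall R) (smoothedPhase (gaussianWeight a) φ)
      ≤ Real.exp (-(Real.pi * a / 4 * R)) *
          (∑' q, Real.exp (-gaussianWeight (a / 2) q)) ^ 2 := by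
        refine offDiagonalMass_le_mul_sq_tsum (summable_norm_smoothedPhase_gaussianWeight ha φ)
          (summable_exp_neg_gaussianWeight (by positivity)) (fun _ ↦ (Real.exp_pos _).le)
          (Real.exp_pos _).le fun h hh q ↦ ?_
        rw [norm_smoothedPhase, norm_smoothedPhase]
        exact exp_neg_gaussianWeight_add_mul_le ha.le
          (le_of_not_ge fun hle ↦ hh (mem_normBall.mpr hle)) q
    _ ≤ Real.exp (-(Real.pi * a / 4 * R)) * (K * 2 / a) ^ 2 := by gcongr

/-- Beyond norm `Q ^ (1 + δ)` the Gaussian of width `Q` decays like `exp (-c Q ^ δ)`, which beats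
every power of `Q`. -/
lemma exists_card_pow_mul_offDiagonalMass_le (N : ℕ) {κ δ : ℝ} (hκ : 1 ≤ κ) (hδ : 0 < δ) :
    ∃ D : ℝ, 0 ≤ D ∧ ∀ Q, 1 ≤ Q → ∀ φ : GaussianInt → ℝ,
      ((normBall (Q ^ (1 + δ))).card : ℝ) ^ N *
        offDiagonalMass (normBall (Q ^ (1 + δ)))
          (smoothedPhase (gaussianWeight (1 / (κ * Q))) φ) ≤ D := by
  obtain ⟨K, hK, hcard⟩ := exists_card_normBall_le
  obtain ⟨L, hL, hmass⟩ := exists_offDiagonalMass_normBall_le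
  have : 0 < κ := one_pos.trans_le hκ
  set p : ℝ := (1 + δ) * N + 2
  have hp : 0 < p := by positivity
  set b : ℝ := Real.pi / (4 * κ)
  have hb : 0 < b := by positivity
  refine ⟨K ^ N * (L * κ) ^ 2 * (p / δ / b) ^ (p / δ), by positivity, fun Q hQ φ ↦ ?_⟩
  have hQ0 : 0 < Q := one_pos.trans_le hQ
  have hexp : Real.pi * (1 / (κ * Q)) / 4 * Q ^ (1 + δ) = b * Q ^ δ := by
    simp only [b, Real.rpow_add hQ0, Real.rpow_one]
    field_simp
  have hdiv : L / (1 / (κ * Q)) = L * κ * Q := by rw [div_div_eq_mul_div, div_one, mul_assoc]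
  have hmassQ := hmass (1 / (κ * Q)) (by positivity)
    ((div_le_one (by positivity)).mpr (one_le_mul_of_one_le_of_one_le hκ hQ)) (Q ^ (1 + δ)) φ
  rw [hexp, hdiv] at hmassQ
  have hpow : (Q ^ (1 + δ)) ^ N * Q ^ 2 = (Q ^ δ) ^ (p / δ) := by
    rw [← Real.rpow_natCast _ N, ← Real.rpow_two, ← Real.rpow_mul hQ0.le, ← Real.rpow_mul hQ0.le,
      ← Real.rpow_add hQ0, mul_div_cancel₀ _ hδ.ne']
  calc _ ≤ (K * Q ^ (1 + δ)) ^ N * (Real.exp (-(b * Q ^ δ)) * (L * κ * Q) ^ 2) := by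
        gcongr
        · exact offDiagonalMass_nonneg _ _
        · exact hcard _ (Real.one_le_rpow hQ (by positivity))
    _ = K ^ N * (L * κ) ^ 2 * ((Q ^ δ) ^ (p / δ) * Real.exp (-(b * Q ^ δ))) := by
        rw [← hpow]
        ring
    _ ≤ _ := by
        gcongr
        exact rpow_mul_exp_neg_le (by positivity) hb (by positivity)

lemma exists_card_normBall_pow_le {ε : ℝ} (hε : 0 < ε) (m : ℕ) :
    ∃ K : ℝ, 0 < K ∧ ∀ Q, 1 ≤ Q →
      ((normBall (Q ^ (1 + ε / 2 ^ m))).card : ℝ) ^ (2 ^ m - (m + 1)) ≤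
        K * Q ^ ((2 : ℝ) ^ m - (m + 1) + ε) := by
  obtain ⟨K, hK, hcard⟩ := exists_card_normBall_le
  refine ⟨K ^ (2 ^ m - (m + 1)), by positivity, fun Q hQ ↦ ?_⟩
  have hQ0 : 0 < Q := one_pos.trans_le hQ
  have hcast : ((2 ^ m - (m + 1) : ℕ) : ℝ) = 2 ^ m - (m + 1) := by
    rw [Nat.cast_sub Nat.lt_two_pow_self]
    push_cast
    rfl
  have hexponent : (1 + ε / 2 ^ m) * ((2 : ℝ) ^ m - (m + 1)) ≤ 2 ^ m - (m + 1) + ε := by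
    have hδ : ε / 2 ^ m * (2 : ℝ) ^ m = ε := by field_simp
    have : 0 ≤ ε / 2 ^ m * ((m : ℝ) + 1) := by positivity
    linarith
  calc _ ≤ (K * Q ^ (1 + ε / 2 ^ m)) ^ (2 ^ m - (m + 1)) := by
        gcongr
        exact hcard _ (Real.one_le_rpow hQ (by positivity))
    _ = K ^ (2 ^ m - (m + 1)) * Q ^ ((1 + ε / 2 ^ m) * ((2 : ℝ) ^ m - (m + 1))) := by
        rw [mul_pow, ← hcast, Real.rpow_mul hQ0.le, Real.rpow_natCast]
    _ ≤ _ := by gcongr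

/-- Weyl differencing with steps of norm at most `Q ^ (1 + ε / 2 ^ m)`, for which the number of
steps costs only an extra `Q ^ ε`; the term `α = 0` absorbs the error of the truncation. -/
lemma exists_norm_tsum_smoothedPhase_pow_le {m : ℕ} (hm : m ≠ 0) {ε : ℝ} (hε : 0 < ε) :
    ∃ C : ℝ, 0 < C ∧ ∀ Q, 1 ≤ Q → ∀ φ : GaussianInt → ℝ,
      ‖∑' q, smoothedPhase (gaussianWeight (1 / (2 ^ m * Q))) φ q‖ ^ 2 ^ m ≤
        C * Q ^ ((2 : ℝ) ^ m - (m + 1) + ε) *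
          ∑ α ∈ Fintype.piFinset fun _ : Fin m ↦ normBall (Q ^ (1 + ε)),
            ‖∑' q, iterMulDiff (smoothedPhase (gaussianWeight (1 / (2 ^ m * Q))) φ) α q‖ := by
  obtain ⟨D, hD, hmass⟩ := exists_card_pow_mul_offDiagonalMass_le (2 * m)
    (one_le_pow₀ one_le_two : (1 : ℝ) ≤ 2 ^ m) (div_pos hε (pow_pos two_pos m))
  obtain ⟨K, hK, hcard⟩ := exists_card_normBall_pow_le hε m
  refine ⟨(2 * (D + 1)) ^ (2 ^ m - 1) * K * 2, by positivity, fun Q hQ φ ↦ ?_⟩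
  have hQ0 : 0 < Q := one_pos.trans_le hQ
  have ha : 0 < 1 / (2 ^ m * Q) := by positivity
  set F := smoothedPhase (gaussianWeight (1 / (2 ^ m * Q))) φ
  have hF : Summable fun q ↦ ‖F q‖ := summable_norm_smoothedPhase_gaussianWeight ha φ
  have hF1 (q) : ‖F q‖ ≤ 1 := norm_smoothedPhase_gaussianWeight_le_one ha.le φ q
  have hF0 : ‖F 0‖ = 1 := norm_smoothedPhase_gaussianWeight_zero _ φ
  set X := ∑ α ∈ Fintype.piFinset fun _ : Fin m ↦ normBall (Q ^ (1 + ε / 2 ^ m)),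
    ‖∑' q, iterMulDiff F α q‖
  set Y := ∑ α ∈ Fintype.piFinset fun _ : Fin m ↦ normBall (Q ^ (1 + ε)),
    ‖∑' q, iterMulDiff F α q‖
  have hXY : X ≤ Y := by
    refine Finset.sum_le_sum_of_subset_of_nonneg
      (Fintype.piFinset_subset _ _ fun _ ↦ normBall_subset ?_) fun _ _ _ ↦ norm_nonneg _
    gcongr
    exact div_le_self hε.le (one_le_pow₀ one_le_two)
  have hY : 1 ≤ Y := one_le_sum_norm_tsum_iterMulDiff hF hF1 hF0 hm
    (zero_mem_normBall (Real.rpow_nonneg hQ0.le _))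
  calc ‖∑' q, F q‖ ^ 2 ^ m
      ≤ (2 * (D + 1)) ^ (2 ^ m - 1) *
          ((normBall (Q ^ (1 + ε / 2 ^ m))).card : ℝ) ^ (2 ^ m - (m + 1)) * (X + 1) :=
        norm_tsum_pow_two_pow_le hF hF1 ⟨0, zero_mem_normBall (Real.rpow_nonneg hQ0.le _)⟩ m
          (hmass Q hQ φ)
    _ ≤ (2 * (D + 1)) ^ (2 ^ m - 1) * (K * Q ^ ((2 : ℝ) ^ m - (m + 1) + ε)) * (2 * Y) := by
        gcongr
        · exact hcard Q hQ
        · linarith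
    _ = _ := by ring

end GaussianSmoothing

section PowerPhases

/-- The phase `Re (ξ q ^ k)`. -/
def powPhase (ξ : ℂ) (k : ℕ) (q : GaussianInt) : ℝ := (ξ * (q : ℂ) ^ k).re

lemma iterFwdDiff_powPhase (ξ : ℂ) {m : ℕ} (α : Fin m → GaussianInt) (q : GaussianInt) :
    iterFwdDiff (powPhase ξ (m + 1)) α q =
      (ξ * (((m + 1).factorial : ℂ) * ∏ v, (α v : ℂ)) * ((q : ℂ) + (∑ v, (α v : ℂ)) / 2)).re := by
  have hcomp : iterFwdDiff (powPhase ξ (m + 1)) α q =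
      (ξ * iterFwdDiff (fun z ↦ z ^ (m + 1)) (fun v ↦ (α v : ℂ)) (q : ℂ)).re :=
    iterFwdDiff_comp_addMonoidHom (Complex.reAddGroupHom.comp (AddMonoidHom.mulLeft ξ))
      GaussianInt.toComplex.toAddMonoidHom (fun z ↦ z ^ (m + 1)) α q
  rw [hcomp]
  congr 1
  linear_combination ξ / 2 * two_mul_iterFwdDiff_pow_add_one (fun v ↦ (α v : ℂ)) (q : ℂ)

end PowerPhases

theorem weyl_differencing_power_sum_general {k : ℕ} (hk : 2 ≤ k) {ε : ℝ} (hε : 0 < ε) :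
    ∃ C : ℝ, 0 < C ∧ ∀ Q0 : ℝ, 1 ≤ Q0 → ∀ ξ : ℂ,
      ‖∑' q : GaussianInt,
          ((Real.exp (-Real.pi * gN q / ((2 : ℝ) ^ (k - 1) * Q0)) : ℝ) : ℂ) *
            e ((ξ * (q : ℂ) ^ k).re)‖ ^ (2 ^ (k - 1)) ≤
        C * Q0 ^ ((2 : ℝ) ^ (k - 1) - k + ε) *
          ∑' α : {α : Fin (k - 1) → GaussianInt // ∀ v, gN (α v) ≤ Q0 ^ (1 + ε)},
            ‖∑' q : GaussianInt,
                ((Real.exp (-(Real.pi / ((2 : ℝ) ^ (k - 1) * Q0)) *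
                    ∑ u : Fin (k - 1) → Bool, gN ((∑ v, if u v then α.1 v else 0) + q)) : ℝ) : ℂ) *
                  e ((ξ * ((k.factorial : ℂ) * ∏ v, (α.1 v : ℂ)) *
                    ((q : ℂ) + (∑ v, (α.1 v : ℂ)) / 2)).re)‖ := by
  obtain ⟨m, rfl⟩ : ∃ m, k = m + 1 := ⟨k - 1, by omega⟩
  obtain ⟨C, hC, hbound⟩ := exists_norm_tsum_smoothedPhase_pow_le (m := m) (by omega) hε
  refine ⟨C, hC, fun Q0 hQ0 ξ ↦ ?_⟩
  have hbound := hbound Q0 hQ0 (powPhase ξ (m + 1))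
  rw [← tsum_forall_gN_le] at hbound
  simp only [iterMulDiff_smoothedPhase, smoothedPhase, iterFwdDiff_powPhase, powPhase,
    gaussianWeight, mul_one_div, mul_div_right_comm, neg_mul, neg_div, ← Finset.mul_sum,
    Nat.add_sub_cancel, Nat.cast_succ] at hbound ⊢
  exact hbound

/-- **Weyl differencing for the `k`-th power sums** (inequality (37) of the paper).
For `k ≥ 2`, `κ = 2^{k-1}`, `ε ∈ (0,1)` there is `C(k,ε)` such that for `Q₀ ≥ 2`,
`q₁ ≠ 0` and `r₁, j ∈ ℤ[i]`,
`|S_k(q₁,r₁,j)|^κ ≤ C Q₀^{κ-k+ε} ∑_{α, N(α_v) ≤ Q₀^{1+ε}}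
  |∑_q exp(-(π/(κQ₀)) ∑_{u ∈ {0,1}^{k-1}} N(u·α+q))
      e(Re((j r₁/q₁^k)·k!α₁⋯α_{k-1}(q + (α₁+⋯+α_{k-1})/2)))|`. -/
theorem weyl_differencing_power_sum :
    ∀ k : ℕ, 2 ≤ k → ∀ ε : ℝ, 0 < ε → ε < 1 → ∃ C : ℝ, 0 < C ∧
      ∀ Q0 : ℝ, 2 ≤ Q0 → ∀ q1 : GaussianInt, q1 ≠ 0 → ∀ r1 j : GaussianInt,
      ‖Sk k Q0 q1 r1 j‖ ^ (2 ^ (k - 1))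
        ≤ C * Q0 ^ (((2 : ℝ) ^ (k - 1) : ℝ) - k + ε) *
          ∑' α : {α : Fin (k - 1) → GaussianInt // ∀ v, gN (α v) ≤ Q0 ^ ((1 : ℝ) + ε)},
            ‖∑' q : GaussianInt,
                ((Real.exp (-(Real.pi / ((2 : ℝ) ^ (k - 1) * Q0)) *
                    ∑ u : Fin (k - 1) → Bool,
                      gN ((∑ v, if u v then (α : Fin (k - 1) → GaussianInt) v else 0) + q)) : ℝ) : ℂ)
                  * e ((((j : ℂ) * (r1 : ℂ) / (q1 : ℂ) ^ k)
                      * ((Nat.factorial k : ℂ) * ∏ v, (((α : Fin (k - 1) → GaussianInt) v : GaussianInt) : ℂ))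
                      * ((q : ℂ) + (∑ v, (((α : Fin (k - 1) → GaussianInt) v : GaussianInt) : ℂ)) / 2)).re)‖ := by
  intro k hk ε hε _
  obtain ⟨C, hC, hbound⟩ := weyl_differencing_power_sum_general hk hε
  refine ⟨C, hC, fun Q0 hQ0 q1 _ r1 j ↦ ?_⟩
  simpa only [Sk, div_mul_eq_mul_div] using
    hbound Q0 (one_le_two.trans hQ0) ((j : ℂ) * (r1 : ℂ) / (q1 : ℂ) ^ k)
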